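/- Let (W,S) be a Coxeter system with length function ℓ, let w ∈ W and s ∈ S. Then R(ws) = R(w) if and only if wsw⁻¹ ∉ S. -/

import Mathlib

/-- The recoil set of `w`: the set of simple reflections `s` with `ℓ(sw) = ℓ(w) − 1`. -/
def coxRecoil {B W : Type*} [Group W] {M : CoxeterMatrix B} (cs : CoxeterSystem M W)
    (w : W) : Set W :=
  {s | s ∈ Set.range cs.simple ∧ cs.length (s * w) + 1 = cs.length w}

section aux
variable {B W : Type*} [Group W] {M : CoxeterMatrix B} (cs : CoxeterSystem M W)

open Classical in
/-- Action of a simple reflection on `W × ZMod 2`. -/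
noncomputable def auxF (i : B) : Function.End (W × ZMod 2) := fun p =>
  (cs.simple i * p.1 * (cs.simple i)⁻¹, p.2 + if p.1 = cs.simple i then 1 else 0)

lemma aux_c (i j : B) (k : ℕ) :
    cs.simple j * (cs.simple i * cs.simple j) ^ k
      = ((cs.simple i * cs.simple j) ^ k)⁻¹ * cs.simple j := by
  induction k with
  | zero => simp
  | succ k ih =>
    rw [pow_succ, ← mul_assoc, ih, ← pow_succ, pow_succ']
    simp [mul_assoc]

open Classical in
lemma aux_pow (i j : B) (n : ℕ) (t : W) (e : ZMod 2) :
    ((auxF cs i * auxF cs j) ^ n) (t, e) =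
      ((cs.simple i * cs.simple j) ^ n * t * ((cs.simple i * cs.simple j) ^ n)⁻¹,
        e + ∑ k ∈ Finset.range (2 * n),
          if t = cs.simple j * (cs.simple i * cs.simple j) ^ k then 1 else 0) := by
  induction n with
  | zero => simp; rfl
  | succ n ih =>
    have h0 : ((auxF cs i * auxF cs j) ^ (n+1)) (t, e)
      = auxF cs i (auxF cs j (((auxF cs i * auxF cs j) ^ n) (t, e))) := by
      rw [pow_succ']; rfl
    rw [h0, ih]
    set c := cs.simple i * cs.simple j with hc
    have e1 : (c ^ n * t * (c ^ n)⁻¹ = cs.simple j) ↔ t = cs.simple j * c ^ (2 * n) := by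
      rw [two_mul, pow_add, ← mul_assoc, aux_c, ← hc]
      constructor
      · intro h; rw [← h]; group
      · intro h; rw [h]; group
    have e2 : (cs.simple j * (c ^ n * t * (c ^ n)⁻¹) * (cs.simple j)⁻¹ = cs.simple i) ↔
        t = cs.simple j * c ^ (2 * n + 1) := by
      have : cs.simple j * c ^ (2 * n + 1)
          = (c ^ n)⁻¹ * ((cs.simple j)⁻¹ * cs.simple i * cs.simple j) * c ^ n := by
        rw [show 2 * n + 1 = n + (1 + n) by ring, pow_add, pow_add, ← mul_assoc, aux_c, ← hc,
          pow_one, hc]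
        simp [mul_assoc]
      rw [this]
      constructor
      · intro h; rw [← h]; group
      · intro h; rw [h]; group
    have h2 : 2 * (n + 1) = 2 * n + 1 + 1 := by ring
    rw [h2, Finset.sum_range_succ, Finset.sum_range_succ]
    simp only [auxF, e1, e2]
    refine Prod.ext ?_ ?_
    · rw [pow_succ' c n]; simp [hc, mul_assoc]
    · simp only [add_assoc]

lemma aux_lift : M.IsLiftable (auxF cs) := by
  classical
  intro i j
  funext ⟨t, e⟩
  rw [aux_pow, cs.simple_mul_simple_pow, two_mul, Finset.sum_range_add]
  simp only [pow_add, cs.simple_mul_simple_pow, one_mul, CharTwo.add_self_eq_zero]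
  simp; rfl

/-- The lifted action. -/
noncomputable def auxP : W →* Function.End (W × ZMod 2) := cs.lift ⟨auxF cs, aux_lift cs⟩

lemma auxP_simple (i : B) : auxP cs (cs.simple i) = auxF cs i := cs.lift_apply_simple _ i

open Classical in
lemma auxP_word (ω : List B) (t : W) (e : ZMod 2) :
    auxP cs (cs.wordProd ω) (t, e) = (cs.wordProd ω * t * (cs.wordProd ω)⁻¹,
      e + ((cs.rightInvSeq ω).count t : ZMod 2)) := by
  induction ω with
  | nil => simp; rfl
  | cons i ω ih =>
    have : auxP cs (cs.wordProd (i :: ω)) (t, e)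
      = auxF cs i (auxP cs (cs.wordProd ω) (t, e)) := by
      rw [cs.wordProd_cons, map_mul, auxP_simple]; rfl
    rw [this, ih]
    have e1 : cs.wordProd ω * t * (cs.wordProd ω)⁻¹ = cs.simple i ↔
        (cs.wordProd ω)⁻¹ * cs.simple i * cs.wordProd ω = t := by
      constructor
      · intro h; rw [← h]; group
      · intro h; rw [← h]; group
    simp only [auxF, e1, CoxeterSystem.rightInvSeq, List.count_cons, cs.wordProd_cons]
    refine Prod.ext ?_ ?_
    · simp [mul_assoc]
    · simp [add_assoc]

/-- The reflection cocycle. -/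
noncomputable def auxEta (w t : W) : ZMod 2 := (auxP cs w (t, 0)).2

lemma auxP_eq (w t : W) (e : ZMod 2) : auxP cs w (t, e) = (w * t * w⁻¹, e + auxEta cs w t) := by
  obtain ⟨ω, rfl⟩ := cs.wordProd_surjective w
  simp [auxEta, auxP_word]

open Classical in
lemma auxEta_left (i : B) (w t : W) :
    auxEta cs (cs.simple i * w) t
      = auxEta cs w t + if w * t * w⁻¹ = cs.simple i then 1 else 0 := by
  have : auxP cs (cs.simple i * w) (t, 0) = auxF cs i (auxP cs w (t, 0)) := by
    rw [map_mul, auxP_simple]; rfl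
  rw [auxEta, this, auxP_eq]
  simp [auxF]

lemma auxEta_right (i : B) (w : W) :
    auxEta cs (w * cs.simple i) (cs.simple i) = auxEta cs w (cs.simple i) + 1 := by
  have : auxP cs (w * cs.simple i) (cs.simple i, 0)
      = auxP cs w (auxF cs i (cs.simple i, 0)) := by
    rw [map_mul, auxP_simple]; rfl
  rw [auxEta, this]
  simp [auxF, auxP_eq, add_comm]

lemma aux_lt (w : W) (i : B) (h : auxEta cs w (cs.simple i) = 1) :
    cs.length (w * cs.simple i) < cs.length w := by
  classical
  obtain ⟨ω, hω, rfl⟩ := cs.exists_isReduced w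
  refine (cs.isRightInversion_of_mem_rightInvSeq hω ?_).2
  by_contra hn
  simp [auxEta, auxP_word, List.count_eq_zero_of_not_mem hn] at h

lemma aux_zmod (x : ZMod 2) : x = 0 ∨ x = 1 := by revert x; decide

lemma aux_iff (w : W) (i : B) :
    cs.length (cs.simple i * w) + 1 = cs.length w ↔ auxEta cs w⁻¹ (cs.simple i) = 1 := by
  rw [← cs.isLeftDescent_iff, ← cs.isRightDescent_inv_iff]
  constructor
  · intro h
    rcases aux_zmod (auxEta cs w⁻¹ (cs.simple i)) with h0 | h0
    · have := aux_lt cs (w⁻¹ * cs.simple i) i (by rw [auxEta_right, h0, zero_add])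
      rw [cs.simple_mul_simple_cancel_right] at this
      exact absurd h (lt_asymm this)
    · exact h0
  · exact aux_lt cs _ i

end aux

/-- `R(ws) = R(w)` if and only if `wsw⁻¹ ∉ S`. -/
theorem statement9 {B W : Type*} [Group W] {M : CoxeterMatrix B} (cs : CoxeterSystem M W)
    (w s : W) (hs : s ∈ Set.range cs.simple) :
    coxRecoil cs (w * s) = coxRecoil cs w ↔ w * s * w⁻¹ ∉ Set.range cs.simple := by
  classical
  obtain ⟨j, rfl⟩ := hs
  have key : ∀ i, ((cs.simple i ∈ coxRecoil cs (w * cs.simple j) ↔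
      cs.simple i ∈ coxRecoil cs w) ↔ ¬ (cs.simple i = w * cs.simple j * w⁻¹)) := by
    intro i
    have e1 : (w⁻¹ * cs.simple i * w⁻¹⁻¹ = cs.simple j) ↔
        cs.simple i = w * cs.simple j * w⁻¹ := by
      constructor
      · intro h; rw [← h]; group
      · intro h; rw [h]; group
    simp only [coxRecoil, Set.mem_setOf_eq, Set.mem_range_self, true_and, aux_iff, mul_inv_rev,
      cs.inv_simple, auxEta_left, e1]
    by_cases h : cs.simple i = w * cs.simple j * w⁻¹
    · rcases aux_zmod (auxEta cs w⁻¹ (cs.simple i)) with h0 | h0 <;> rw [h0] <;> simp [h] <;> decide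
    · simp [h]
  constructor
  · rintro h ⟨i, hi⟩
    exact (key i).1 (by rw [h]) hi
  · intro h
    ext r
    constructor
    · rintro ⟨⟨i, rfl⟩, h2⟩
      exact ((key i).2 fun hi => h ⟨i, hi⟩).1 ⟨⟨i, rfl⟩, h2⟩
    · rintro ⟨⟨i, rfl⟩, h2⟩
      exact ((key i).2 fun hi => h ⟨i, hi⟩).2 ⟨⟨i, rfl⟩, h2⟩
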